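/- arXiv:1307.4002 — 5 statements merged into one kernel-verified Lean document; each statement's English description precedes it below -/
import Mathlib

section
/- There exists a constant C > 0 such that for every ε ∈ (0,1], | ∫_{−1}^{1} dt / (ε + 2(1 − √(1 − t²))) − π/√ε | ≤ C. -/
/-- The gap width `ε + 2(1 - √(1 - t²))` may be replaced by `ε + t²` at bounded cost. -/
theorem abs_one_div_gap_sub_one_div_parabola_le {ε t : ℝ} (hε : 0 < ε) (ht : t ^ 2 ≤ 1) :
    |1 / (ε + 2 * (1 - Real.sqrt (1 - t ^ 2))) - 1 / (ε + t ^ 2)| ≤ 1 := by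
  have hs : Real.sqrt (1 - t ^ 2) ^ 2 = 1 - t ^ 2 := Real.sq_sqrt (by linarith)
  have hs₀ := Real.sqrt_nonneg (1 - t ^ 2)
  have hs₁ : Real.sqrt (1 - t ^ 2) ≤ 1 := Real.sqrt_le_one.2 (by nlinarith)
  set s := Real.sqrt (1 - t ^ 2)
  have hgap : 0 < ε + 2 * (1 - s) := by linarith
  have hpar : 0 < ε + t ^ 2 := by positivity
  have hsub : 1 / (ε + 2 * (1 - s)) - 1 / (ε + t ^ 2)
      = -((1 - s) ^ 2 / ((ε + 2 * (1 - s)) * (ε + t ^ 2))) := by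
    field_simp
    linear_combination hs
  rw [hsub, abs_neg, abs_of_nonneg (by positivity), div_le_one (by positivity), sq]
  exact mul_le_mul (by linarith) (by nlinarith) (by linarith) hgap.le

theorem arctan_le_self_of_nonneg {x : ℝ} (hx : 0 ≤ x) : Real.arctan x ≤ x := by
  simpa using Real.le_tan (Real.arctan_nonneg.2 hx) (Real.arctan_lt_pi_div_two x)

/-- The integral of the parabolic approximation, up to a bounded error. -/
theorem abs_integral_parabola_sub_le {a : ℝ} (ha : 0 < a) :
    |(∫ t in (-1 : ℝ)..1, 1 / (a ^ 2 + t ^ 2)) - Real.pi / a| ≤ 2 := by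
  have hinv : Real.arctan (1 / a) = Real.pi / 2 - Real.arctan a := by
    rw [one_div, Real.arctan_inv_of_pos ha]
  have hsub : (∫ t in (-1 : ℝ)..1, 1 / (a ^ 2 + t ^ 2)) - Real.pi / a
      = -(2 * Real.arctan a / a) := by
    simp only [one_div (a ^ 2 + _)]
    rw [integral_inv_sq_add_sq ha.ne', neg_div, Real.arctan_neg, hinv]
    ring
  have hnonneg : 0 ≤ Real.arctan a := Real.arctan_nonneg.2 ha.le
  rw [hsub, abs_neg, abs_of_nonneg (by positivity), div_le_iff₀ ha]
  linarith [arctan_le_self_of_nonneg ha.le]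

/-- There is a constant `C > 0` such that for every `ε ∈ (0,1]`,
`| ∫_{−1}^{1} dt / (ε + 2(1 − √(1 − t²))) − π/√ε | ≤ C`. -/
theorem gap_integral_estimate :
    ∃ C > (0 : ℝ), ∀ ε ∈ Set.Ioc (0 : ℝ) 1,
      |(∫ t in (-1 : ℝ)..1, 1 / (ε + 2 * (1 - Real.sqrt (1 - t ^ 2))))
        - Real.pi / Real.sqrt ε| ≤ C := by
  refine ⟨4, by norm_num, fun ε hε => ?_⟩
  have hpos : 0 < ε := hε.1
  have hgap : IntervalIntegrable (fun t : ℝ => 1 / (ε + 2 * (1 - Real.sqrt (1 - t ^ 2))))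
      MeasureTheory.volume (-1) 1 := by
    refine (continuous_const.div (by fun_prop) fun t => ?_).intervalIntegrable _ _
    have : Real.sqrt (1 - t ^ 2) ≤ 1 := Real.sqrt_le_one.2 (by nlinarith)
    linarith
  have hpar : IntervalIntegrable (fun t : ℝ => 1 / (ε + t ^ 2)) MeasureTheory.volume (-1) 1 :=
    (continuous_const.div (by fun_prop) fun t => by positivity).intervalIntegrable _ _
  have hdiff : |(∫ t in (-1 : ℝ)..1, 1 / (ε + 2 * (1 - Real.sqrt (1 - t ^ 2))))
      - ∫ t in (-1 : ℝ)..1, 1 / (ε + t ^ 2)| ≤ 2 := by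
    rw [← intervalIntegral.integral_sub hgap hpar, ← Real.norm_eq_abs]
    refine (intervalIntegral.norm_integral_le_of_norm_le_const (C := 1) fun t ht => ?_).trans
      (by norm_num)
    rw [Set.uIoc_of_le (by norm_num)] at ht
    exact abs_one_div_gap_sub_one_div_parabola_le hpos (by nlinarith [ht.1, ht.2])
  have hmain := abs_integral_parabola_sub_le (Real.sqrt_pos.2 hpos)
  rw [Real.sq_sqrt hpos.le] at hmain
  linarith [abs_sub_le (∫ t in (-1 : ℝ)..1, 1 / (ε + 2 * (1 - Real.sqrt (1 - t ^ 2))))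
    (∫ t in (-1 : ℝ)..1, 1 / (ε + t ^ 2)) (Real.pi / Real.sqrt ε)]
end

section
/- For every real λ > 0, ∫_{−∞}^{∞} λ / (e^{λ(1+y²)} − 1) dy = √(πλ) · Σ_{n=1}^{∞} e^{−λn}/√n, where the series on the right converges (it equals √(πλ) Li_{1/2}(e^{−λ}), the polylogarithm of order 1/2 evaluated at e^{−λ}). -/
/-- The geometric expansion of the Bose–Einstein factor `1 / (eᵗ − 1)`. -/
lemma hasSum_exp_neg_mul_succ {t : ℝ} (ht : 0 < t) :
    HasSum (fun n : ℕ => Real.exp (-t * (n + 1))) (1 / (Real.exp t - 1)) := by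
  have hlt : Real.exp (-t) < 1 := Real.exp_lt_one_iff.mpr (neg_lt_zero.mpr ht)
  have hgt : 0 < Real.exp t - 1 := sub_pos.mpr (Real.one_lt_exp_iff.mpr ht)
  have hterm (n : ℕ) : Real.exp (-t * (n + 1)) = Real.exp (-t) * Real.exp (-t) ^ n := by
    rw [← Real.exp_nat_mul, ← Real.exp_add]
    ring_nf
  have hvalue : 1 / (Real.exp t - 1) = Real.exp (-t) * (1 - Real.exp (-t))⁻¹ := by
    have hmul : Real.exp (-t) * Real.exp t = 1 := by simp [← Real.exp_add]
    rw [← div_eq_mul_inv, div_eq_div_iff hgt.ne' (sub_pos.mpr hlt).ne']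
    linear_combination -hmul
  simp only [hterm, hvalue]
  exact (hasSum_geometric_of_lt_one (Real.exp_pos _).le hlt).mul_left _

lemma summable_exp_neg_mul_succ_div_sqrt {t : ℝ} (ht : 0 < t) :
    Summable (fun n : ℕ => Real.exp (-t * (n + 1)) / Real.sqrt (n + 1)) := by
  refine (hasSum_exp_neg_mul_succ ht).summable.of_nonneg_of_le (fun n => by positivity) fun n => ?_
  exact div_le_self (Real.exp_pos _).le (Real.one_le_sqrt.mpr (by simp))

lemma mul_sqrt_pi_div_mul {a b : ℝ} (ha : 0 < a) :
    a * Real.sqrt (Real.pi / (a * b)) = Real.sqrt (Real.pi * a) / Real.sqrt b := by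
  rw [← Real.sqrt_div (by positivity)]
  nth_rewrite 1 [← Real.sqrt_sq ha.le]
  rw [← Real.sqrt_mul (by positivity)]
  congr 1
  field_simp

/-- For every `λ > 0`,
`∫_{−∞}^{∞} λ/(e^{λ(1+y²)} − 1) dy = √(πλ) · ∑_{n=1}^{∞} e^{−λn}/√n`,
where the series on the right converges (it equals `√(πλ) Li_{1/2}(e^{−λ})`). -/
theorem integral_eq_sqrt_pi_lambda_mul_polylog (lam : ℝ) (hlam : 0 < lam) :
    Summable (fun n : ℕ => Real.exp (-lam * (n + 1)) / Real.sqrt (n + 1)) ∧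
    ∫ y : ℝ, lam / (Real.exp (lam * (1 + y ^ 2)) - 1)
      = Real.sqrt (Real.pi * lam)
        * ∑' n : ℕ, Real.exp (-lam * (n + 1)) / Real.sqrt (n + 1) := by
  have hsum := summable_exp_neg_mul_succ_div_sqrt hlam
  refine ⟨hsum, ?_⟩
  let F : ℕ → ℝ → ℝ := fun n y =>
    lam * Real.exp (-lam * (n + 1)) * Real.exp (-(lam * (n + 1)) * y ^ 2)
  have hF_int (n : ℕ) : MeasureTheory.Integrable (F n) :=
    (integrable_exp_neg_mul_sq (by positivity)).const_mul _
  have hF_integral (n : ℕ) : ∫ y, F n y =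
      Real.sqrt (Real.pi * lam) * (Real.exp (-lam * (n + 1)) / Real.sqrt (n + 1)) := by
    rw [MeasureTheory.integral_const_mul, integral_gaussian, mul_right_comm,
      mul_sqrt_pi_div_mul hlam]
    ring
  have hF_norm (n : ℕ) (y : ℝ) : ‖F n y‖ = F n y := Real.norm_of_nonneg (by positivity)
  have hF_tsum (y : ℝ) : ∑' n, F n y = lam / (Real.exp (lam * (1 + y ^ 2)) - 1) := by
    have h := (hasSum_exp_neg_mul_succ (t := lam * (1 + y ^ 2)) (by positivity)).mul_left lam
    rw [mul_one_div] at h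
    rw [← h.tsum_eq]
    refine tsum_congr fun n => ?_
    simp only [F]
    rw [mul_assoc, ← Real.exp_add]
    ring_nf
  have h := MeasureTheory.hasSum_integral_of_summable_integral_norm hF_int
    (by simpa only [hF_norm, hF_integral] using hsum.mul_left _)
  simp only [hF_tsum, hF_integral] at h
  rw [← h.tsum_eq, tsum_mul_left]
end

section
/- For every p ∈ (0,1), 0 < p(1 − p² + (1 + p²) ln p) / ((1 − p²)² ln p) ≤ 1/6. -/
/-- `sinh t < t cosh t` for `t > 0`. -/
lemma sinh_lt_mul_cosh {t : ℝ} (ht : 0 < t) : Real.sinh t < t * Real.cosh t := by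
  have hd (x : ℝ) : HasDerivAt (fun x => x * Real.cosh x - Real.sinh x) (x * Real.sinh x) x :=
    (((hasDerivAt_id x).mul (Real.hasDerivAt_cosh x)).sub (Real.hasDerivAt_sinh x)).congr_deriv
      (by simp)
  have hmono : StrictMonoOn (fun x => x * Real.cosh x - Real.sinh x) (Set.Ici 0) := by
    refine strictMonoOn_of_deriv_pos (convex_Ici 0)
      (fun x _ => (hd x).continuousAt.continuousWithinAt) fun x hx => ?_
    rw [interior_Ici, Set.mem_Ioi] at hx
    rw [(hd x).deriv]
    exact mul_pos hx (Real.sinh_pos_iff.2 hx)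
  have h := hmono Set.self_mem_Ici ht.le ht
  simp only [Real.sinh_zero, zero_mul, sub_zero] at h
  linarith

/-- `3 (t cosh t - sinh t) ≤ t sinh² t` for `t ≥ 0`. -/
lemma three_mul_mul_cosh_sub_sinh_le {t : ℝ} (ht : 0 ≤ t) :
    3 * (t * Real.cosh t - Real.sinh t) ≤ t * Real.sinh t ^ 2 := by
  have hd (x : ℝ) : HasDerivAt
      (fun x => x * Real.sinh x ^ 2 - 3 * (x * Real.cosh x - Real.sinh x))
      (Real.sinh x * (Real.sinh x + 2 * x * Real.cosh x - 3 * x)) x :=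
    (((hasDerivAt_id x).mul ((Real.hasDerivAt_sinh x).pow 2)).sub
      ((((hasDerivAt_id x).mul (Real.hasDerivAt_cosh x)).sub
        (Real.hasDerivAt_sinh x)).const_mul 3)).congr_deriv (by simp; ring)
  have hmono : MonotoneOn
      (fun x => x * Real.sinh x ^ 2 - 3 * (x * Real.cosh x - Real.sinh x)) (Set.Ici 0) := by
    refine monotoneOn_of_deriv_nonneg (convex_Ici 0)
      (fun x _ => (hd x).continuousAt.continuousWithinAt)
      (fun x _ => (hd x).differentiableAt.differentiableWithinAt) fun x hx => ?_
    rw [interior_Ici, Set.mem_Ioi] at hx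
    rw [(hd x).deriv]
    have hsinh : x ≤ Real.sinh x := Real.self_le_sinh_iff.2 hx.le
    have hcosh : 1 ≤ Real.cosh x := Real.one_le_cosh x
    exact mul_nonneg (hx.le.trans hsinh) (by nlinarith)
  have h := hmono Set.self_mem_Ici ht ht
  simp only [Real.sinh_zero, zero_mul, sub_zero, mul_zero] at h
  linarith

/-- The substitution `p = exp (-t)` turns the coefficient into a hyperbolic expression. -/
lemma coefficient_exp_neg {t : ℝ} (ht : 0 < t) :
    Real.exp (-t) * (1 - Real.exp (-t) ^ 2 + (1 + Real.exp (-t) ^ 2) * -t) /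
        ((1 - Real.exp (-t) ^ 2) ^ 2 * -t) =
      (t * Real.cosh t - Real.sinh t) / (2 * (t * Real.sinh t ^ 2)) := by
  have hmul : Real.exp t * Real.exp (-t) = 1 := by rw [← Real.exp_add]; simp
  have hsub : 1 - Real.exp (-t) ^ 2 = 2 * Real.exp (-t) * Real.sinh t := by
    rw [Real.sinh_eq]; linear_combination -hmul
  have hadd : 1 + Real.exp (-t) ^ 2 = 2 * Real.exp (-t) * Real.cosh t := by
    rw [Real.cosh_eq]; linear_combination -hmul
  have hsinh : Real.sinh t ≠ 0 := (Real.sinh_pos_iff.2 ht).ne'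
  have hexp : Real.exp (-t) ≠ 0 := Real.exp_ne_zero _
  rw [hsub, hadd]
  field_simp
  ring

/-- For every `p ∈ (0,1)`,
`0 < p(1 − p² + (1 + p²) ln p) / ((1 − p²)² ln p) ≤ 1/6`. -/
theorem coefficient_bound_one_sixth (p : ℝ) (hp : p ∈ Set.Ioo (0 : ℝ) 1) :
    0 < p * (1 - p ^ 2 + (1 + p ^ 2) * Real.log p) / ((1 - p ^ 2) ^ 2 * Real.log p) ∧
    p * (1 - p ^ 2 + (1 + p ^ 2) * Real.log p) / ((1 - p ^ 2) ^ 2 * Real.log p) ≤ 1 / 6 := by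
  obtain ⟨t, ht, rfl⟩ : ∃ t : ℝ, 0 < t ∧ Real.exp (-t) = p :=
    ⟨-Real.log p, neg_pos.2 (Real.log_neg hp.1 hp.2), by rw [neg_neg, Real.exp_log hp.1]⟩
  have hden : 0 < t * Real.sinh t ^ 2 := mul_pos ht (pow_pos (Real.sinh_pos_iff.2 ht) 2)
  rw [Real.log_exp, coefficient_exp_neg ht]
  refine ⟨div_pos (sub_pos.2 (sinh_lt_mul_cosh ht)) (by positivity), ?_⟩
  rw [div_le_iff₀ (by positivity)]
  linarith [three_mul_mul_cosh_sub_sinh_le ht.le]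
end

section
/- For every p ∈ (0,1), −1 < (1 − p² + 2p ln p) / ((1 − p²) ln p) < 0; in particular its absolute value is at most 1. (Equivalently, 1 − p² + 2p ln p > 0 and (1 − p² + 2p ln p) < −(1 − p²) ln p · 1 for p ∈ (0,1).) -/
/-- For `p ∈ (0,1)`, the inequality `t < sinh t` at `t = -log p`, cleared of denominators. -/
theorem one_sub_sq_add_two_mul_log_pos {p : ℝ} (h0 : 0 < p) (h1 : p < 1) :
    0 < 1 - p ^ 2 + 2 * p * Real.log p := by
  have h : -Real.log p < Real.sinh (-Real.log p) :=
    Real.self_lt_sinh_iff.2 (neg_pos.2 (Real.log_neg h0 h1))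
  rw [Real.sinh_eq, neg_neg, Real.exp_neg, Real.exp_log h0] at h
  have h' := mul_lt_mul_of_pos_left h h0
  have hp : p * ((p⁻¹ - p) / 2) = (1 - p ^ 2) / 2 := by field_simp
  linarith

/-- For `p ∈ (0,1)`, the Padé-type lower bound `2 (1 - p) / (1 + p) < -log p`. -/
theorem two_mul_one_sub_lt_neg_log_mul {p : ℝ} (h0 : 0 < p) (h1 : p < 1) :
    2 * (1 - p) < -Real.log p * (1 + p) := by
  have h := Real.lt_log_one_add_of_pos (sub_pos.2 ((one_lt_inv₀ h0).2 h1))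
  rw [add_sub_cancel, Real.log_inv] at h
  have hp : 2 * (p⁻¹ - 1) / (p⁻¹ - 1 + 2) = 2 * (1 - p) / (1 + p) := by
    have : p⁻¹ - 1 + 2 = (1 + p) / p := by field_simp; ring
    rw [this]
    field_simp
  rwa [hp, div_lt_iff₀ (by linarith)] at h

/-- For every `p ∈ (0,1)`,
`−1 < (1 − p² + 2p ln p) / ((1 − p²) ln p) < 0`; in particular its absolute value is at
most `1` (equivalently `1 − p² + 2p ln p > 0` and `1 − p² + 2p ln p < −(1 − p²) ln p`). -/
theorem coefficient_bound_neg_one_zero (p : ℝ) (hp : p ∈ Set.Ioo (0 : ℝ) 1) :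
    (-1 < (1 - p ^ 2 + 2 * p * Real.log p) / ((1 - p ^ 2) * Real.log p) ∧
      (1 - p ^ 2 + 2 * p * Real.log p) / ((1 - p ^ 2) * Real.log p) < 0) ∧
    |(1 - p ^ 2 + 2 * p * Real.log p) / ((1 - p ^ 2) * Real.log p)| ≤ 1 ∧
    0 < 1 - p ^ 2 + 2 * p * Real.log p ∧
    1 - p ^ 2 + 2 * p * Real.log p < -((1 - p ^ 2) * Real.log p) := by
  obtain ⟨h0, h1⟩ := hp
  have hlog : Real.log p < 0 := Real.log_neg h0 h1
  have hnum := one_sub_sq_add_two_mul_log_pos h0 h1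
  have hlt : 1 - p ^ 2 + 2 * p * Real.log p < -((1 - p ^ 2) * Real.log p) := by
    have hpade := two_mul_one_sub_lt_neg_log_mul h0 h1
    have hq : 0 < 1 + 2 * p - p ^ 2 := by nlinarith
    have h := mul_lt_mul_of_pos_right hpade hq
    have hpoly : 0 < (1 - p) * ((1 - p) * (1 + 3 * p)) := by
      have := sub_pos.2 h1
      positivity
    have : 0 < (1 + p) * (-Real.log p * (1 + 2 * p - p ^ 2) - (1 - p ^ 2)) := by
      linarith
    linarith [pos_of_mul_pos_right this (by linarith)]
  have hden : (1 - p ^ 2) * Real.log p < 0 := mul_neg_of_pos_of_neg (by nlinarith) hlog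
  have hlower : -1 < (1 - p ^ 2 + 2 * p * Real.log p) / ((1 - p ^ 2) * Real.log p) := by
    rw [lt_div_iff_of_neg hden]
    linarith
  have hupper := div_neg_of_pos_of_neg hnum hden
  exact ⟨⟨hlower, hupper⟩, abs_le.2 ⟨hlower.le, by linarith⟩, hnum, hlt⟩
end

section
/- Let L > 0, R > 0, δ > 0 with R + δ < L, and set ρ = L − R − δ. Define d(θ) = L − ρ cos θ − √(R² − ρ² sin² θ). For every θ with ρ² sin² θ ≤ (3/4) R², the derivative of d satisfies (d′(θ))² ≤ 8 L² d(θ) / R. -/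
/-- The derivative of `t ↦ L - ρ cos t - √(R² - ρ² sin² t)` away from the zeros of the radicand. -/
theorem hasDerivAt_sub_mul_cos_sub_sqrt (L R ρ θ : ℝ)
    (h : R ^ 2 - ρ ^ 2 * Real.sin θ ^ 2 ≠ 0) :
    HasDerivAt (fun t => L - ρ * Real.cos t - √(R ^ 2 - ρ ^ 2 * Real.sin t ^ 2))
      (ρ * Real.sin θ +
        ρ ^ 2 * Real.sin θ * Real.cos θ / √(R ^ 2 - ρ ^ 2 * Real.sin θ ^ 2)) θ := by
  have hsqrt := ((((Real.hasDerivAt_sin θ).pow 2).const_mul (ρ ^ 2)).const_sub (R ^ 2)).sqrt h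
  refine ((((Real.hasDerivAt_cos θ).const_mul ρ).const_sub L).sub hsqrt).congr_deriv ?_
  simp only [Pi.pow_apply]
  ring

/-- For the boundary-layer thickness
`d(θ) = L − ρ cos θ − √(R² − ρ² sin² θ)` with `ρ = L − R − δ`, at every `θ` with
`ρ² sin² θ ≤ (3/4) R²` the derivative of `d` satisfies `(d′(θ))² ≤ 8 L² d(θ)/R`. -/
theorem boundary_layer_thickness_deriv_sq_bound
    (L R δ : ℝ) (hL : 0 < L) (hR : 0 < R) (hδ : 0 < δ) (hsum : R + δ < L)
    (ρ : ℝ) (hρ : ρ = L - R - δ)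
    (d : ℝ → ℝ)
    (hd : ∀ t : ℝ, d t = L - ρ * Real.cos t - Real.sqrt (R ^ 2 - ρ ^ 2 * Real.sin t ^ 2))
    (θ : ℝ) (hθ : ρ ^ 2 * Real.sin θ ^ 2 ≤ 3 / 4 * R ^ 2) :
    (deriv d θ) ^ 2 ≤ 8 * L ^ 2 * d θ / R := by
  have hρ0 : 0 < ρ := by linarith
  have hpos : 0 < R ^ 2 - ρ ^ 2 * Real.sin θ ^ 2 := by nlinarith [pow_pos hR 2]
  have hderiv := hasDerivAt_sub_mul_cos_sub_sqrt L R ρ θ hpos.ne'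
  rw [← funext hd] at hderiv
  rw [hderiv.deriv, hd θ]
  set s := √(R ^ 2 - ρ ^ 2 * Real.sin θ ^ 2)
  have hs_sq : s ^ 2 = R ^ 2 - ρ ^ 2 * Real.sin θ ^ 2 := Real.sq_sqrt hpos.le
  have hs_lower : R / 2 ≤ s := Real.le_sqrt_of_sq_le (by nlinarith)
  have hs_upper : s ≤ R :=
    Real.sqrt_le_iff.mpr ⟨hR.le, by nlinarith [sq_nonneg (ρ * Real.sin θ)]⟩
  have hs_pos : 0 < s := by linarith
  have hcos_upper : ρ * Real.cos θ ≤ ρ := mul_le_of_le_one_right hρ0.le (Real.cos_le_one θ)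
  have hcos_lower : -ρ ≤ ρ * Real.cos θ := by nlinarith [Real.neg_one_le_cos θ]
  have hfactor : (s + ρ * Real.cos θ) ^ 2 ≤ L ^ 2 :=
    sq_le_sq' (by linarith) (by linarith)
  have hquot : (s + ρ * Real.cos θ) ^ 2 / s ^ 2 ≤ L ^ 2 / (R / 2) ^ 2 := by gcongr
  calc (ρ * Real.sin θ + ρ ^ 2 * Real.sin θ * Real.cos θ / s) ^ 2
      = (R - s) * (R + s) * ((s + ρ * Real.cos θ) ^ 2 / s ^ 2) := by
        have hfac : (R - s) * (R + s) = (ρ * Real.sin θ) ^ 2 := by linear_combination -hs_sq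
        rw [hfac]
        field_simp
    _ ≤ (R - s) * (R + R) * (L ^ 2 / (R / 2) ^ 2) := by
        have : 0 ≤ R - s := by linarith
        gcongr
    _ = 8 * L ^ 2 * (R - s) / R := by
        field_simp
        ring
    _ ≤ 8 * L ^ 2 * (L - ρ * Real.cos θ - s) / R := by
        gcongr
        linarith
end
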